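/- Let n ≥ 4, let 0 < Z ≤ 2^n and set a = ⌊log_2 Z⌋. Let s and c be integers with 2^n - 2^s < c < 2^n - 2^{s-1} and s > a, and let t be an integer with a + 1 ≤ t ≤ s - 1. Then the number of 2^n-periodic binary sequences S with odd Hamming weight in one period, L_1(S) = c, and L_{1;Z}(S) = 2^n - 2^t is exactly Z · 2^{c + s - t - 2}. -/

import Mathlib

/-- Generating polynomial `S^N(x) = s_0 + s_1 x + ... + s_{N-1} x^{N-1}` of one period
of an `N`-periodic binary sequence. -/
noncomputable def genPoly {N : ℕ} (S : Fin N → ZMod 2) : Polynomial (ZMod 2) :=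
  ∑ i : Fin N, Polynomial.C (S i) * Polynomial.X ^ (i : ℕ)

/-- Linear complexity `L(S) = N - deg (gcd (1 - x^N, S^N(x)))`. -/
noncomputable def linComp {N : ℕ} (S : Fin N → ZMod 2) : ℕ :=
  N - (EuclideanDomain.gcd (1 - Polynomial.X ^ N) (genPoly S)).natDegree

/-- Hamming weight of one period of an `N`-periodic binary sequence. -/
def wt {N : ℕ} (T : Fin N → ZMod 2) : ℕ :=
  (Finset.univ.filter (fun i => T i ≠ 0)).card

/-- `k`-error linear complexity `L_{N,k}(S)`. -/
noncomputable def errLC {N : ℕ} (S : Fin N → ZMod 2) (k : ℕ) : ℕ :=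
  sInf {c | ∃ T : Fin N → ZMod 2, wt T ≤ k ∧ linComp (S + T) = c}

/-- `k`-error linear complexity with a zone of length `Z`: `L_{N,k;Z}(S)`. -/
noncomputable def errLCZone {N : ℕ} (S : Fin N → ZMod 2) (k Z : ℕ) : ℕ :=
  sInf {c | ∃ T : Fin N → ZMod 2, wt T ≤ k ∧ (∀ i : Fin N, Z ≤ (i : ℕ) → T i = 0) ∧
    linComp (S + T) = c}

/-- `E_1(j)`: the sequence whose only nonzero term in one period is a `1` at position `j`. -/
def E1 {N : ℕ} (j : Fin N) : Fin N → ZMod 2 :=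
  fun i => if i = j then 1 else 0

open Polynomial in
lemma gp_coeff {N : ℕ} (S : Fin N → ZMod 2) (k : ℕ) :
    (genPoly S).coeff k = if h : k < N then S ⟨k, h⟩ else 0 := by
  unfold genPoly
  simp only [finsetSum_coeff, coeff_C_mul, coeff_X_pow, mul_ite, mul_one, mul_zero]
  split_ifs with h
  · rw [Finset.sum_eq_single (⟨k, h⟩ : Fin N)]
    · simp
    · intro b _ hb
      rw [if_neg]
      intro hk
      exact hb (Fin.ext hk.symm)
    · simp
  · apply Finset.sum_eq_zero
    intro b _
    rw [if_neg]
    have := b.2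
    omega

lemma gp_inj {N : ℕ} {S T : Fin N → ZMod 2} (h : genPoly S = genPoly T) : S = T := by
  funext i
  have := congrArg (fun p => Polynomial.coeff p i) h
  simpa [gp_coeff] using this

lemma gp_add {N : ℕ} (S T : Fin N → ZMod 2) : genPoly (S + T) = genPoly S + genPoly T := by
  ext k
  simp only [gp_coeff, Polynomial.coeff_add]
  split_ifs <;> simp

lemma gp_E1 {N : ℕ} (j : Fin N) : genPoly (E1 j) = Polynomial.X ^ (j : ℕ) := by
  ext k
  simp only [gp_coeff, Polynomial.coeff_X_pow, E1]
  by_cases h : k < N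
  · simp [h, Fin.ext_iff]
  · have := j.2
    rw [dif_neg h, if_neg (by omega)]

open Polynomial in
lemma gp_of_deg {N : ℕ} (p : (ZMod 2)[X]) (hp : p.degree < N) :
    genPoly (fun i : Fin N => p.coeff i) = p := by
  ext k
  rw [gp_coeff]
  split_ifs with h
  · rfl
  · exact (coeff_eq_zero_of_degree_lt (hp.trans_le (by exact_mod_cast not_lt.mp h))).symm

open Polynomial in
lemma gp_deg {N : ℕ} (S : Fin N → ZMod 2) : (genPoly S).degree < N := by
  rw [degree_lt_iff_coeff_zero]
  intro m hm
  rw [gp_coeff, dif_neg (by omega)]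

/-- the polynomial `X - 1` -/
noncomputable def PP : Polynomial (ZMod 2) := Polynomial.X - Polynomial.C 1

lemma PP_monic : PP.Monic := Polynomial.monic_X_sub_C 1

lemma PP_natDegree : PP.natDegree = 1 := Polynomial.natDegree_X_sub_C 1

lemma PP_prime : Prime PP := Polynomial.prime_X_sub_C 1

lemma poly_neg (p : Polynomial (ZMod 2)) : -p = p := CharTwo.neg_eq p

open Polynomial in
lemma PP_pow (n : ℕ) : PP ^ (2 ^ n) = X ^ (2 ^ n) - 1 := by
  unfold PP
  rw [sub_pow_char_pow]
  simp

open Polynomial in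
lemma linComp_le_iff {n : ℕ} (S : Fin (2 ^ n) → ZMod 2) {m : ℕ} (hm : m ≤ 2 ^ n) :
    linComp S ≤ 2 ^ n - m ↔ PP ^ m ∣ genPoly S := by
  unfold linComp
  have e : (1 - X ^ (2 ^ n) : (ZMod 2)[X]) = PP ^ (2 ^ n) := by
    rw [PP_pow, ← poly_neg (X ^ 2 ^ n - 1)]; ring
  rw [e]
  obtain ⟨i, hi, ha⟩ := (dvd_prime_pow PP_prime _).mp
    (EuclideanDomain.gcd_dvd_left (PP ^ (2 ^ n)) (genPoly S))
  have hd : (EuclideanDomain.gcd (PP ^ 2 ^ n) (genPoly S)).natDegree = i := by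
    rw [natDegree_eq_of_degree_eq (degree_eq_degree_of_associated ha), PP_monic.natDegree_pow, PP_natDegree, mul_one]
  rw [hd]
  have h2 : PP ^ m ∣ genPoly S ↔ PP ^ m ∣ PP ^ i := by
    rw [← ha.dvd_iff_dvd_right]
    constructor
    · intro h
      exact EuclideanDomain.dvd_gcd (pow_dvd_pow _ hm) h
    · intro h
      exact h.trans (EuclideanDomain.gcd_dvd_right _ _)
  rw [h2, pow_dvd_pow_iff PP_prime.ne_zero PP_prime.not_isUnit]
  omega

lemma linComp_eq_iff {n : ℕ} (S : Fin (2 ^ n) → ZMod 2) {m : ℕ} (hm : m < 2 ^ n) :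
    linComp S = 2 ^ n - m ↔ PP ^ m ∣ genPoly S ∧ ¬ PP ^ (m + 1) ∣ genPoly S := by
  rw [← linComp_le_iff S hm.le, ← linComp_le_iff S (show m + 1 ≤ 2 ^ n from hm)]
  omega

open Polynomial in
lemma PP_dvd_aux {e m k : ℕ} (hm : 2 ^ k < m) (hm' : m ≤ 2 ^ (k + 1)) :
    PP ^ m ∣ X ^ e - 1 ↔ 2 ^ (k + 1) ∣ e := by
  constructor
  · intro h
    rcases Nat.eq_zero_or_pos e with rfl | he
    · simp
    obtain ⟨l, o, ho, rfl⟩ := Nat.exists_eq_two_pow_mul_odd he.ne'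
    have e1 : (X ^ (2 ^ l * o) - 1 : (ZMod 2)[X]) = PP ^ (2 ^ l) * (∑ i ∈ Finset.range o, X ^ i) ^ (2 ^ l) := by
      rw [← mul_pow, PP, C_1, mul_geom_sum, sub_pow_char_pow, one_pow, ← pow_mul, mul_comm]
    have hnd : ¬ PP ∣ (∑ i ∈ Finset.range o, X ^ i) ^ (2 ^ l) := by
      intro hh
      have := PP_prime.dvd_of_dvd_pow hh
      rw [PP, dvd_iff_isRoot, IsRoot.def, eval_finsetSum] at this
      simp only [eval_pow, eval_X, one_pow, Finset.sum_const, Finset.card_range, nsmul_eq_mul, mul_one] at this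
      rw [ZMod.natCast_eq_zero_iff_even] at this
      exact (Nat.not_even_iff_odd.mpr ho) this
    have hl : m ≤ 2 ^ l := by
      by_contra hc
      have h3 : PP ^ (2 ^ l + 1) ∣ PP ^ (2 ^ l) * (∑ i ∈ Finset.range o, X ^ i) ^ (2 ^ l) := by
        rw [← e1]
        exact (pow_dvd_pow _ (by omega)).trans h
      rw [pow_succ] at h3
      exact hnd ((mul_dvd_mul_iff_left (pow_ne_zero _ PP_prime.ne_zero)).mp h3)
    have : k < l := (Nat.pow_lt_pow_iff_right (by norm_num : 1 < 2)).mp (hm.trans_le hl)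
    exact (pow_dvd_pow 2 this).mul_right _
  · rintro ⟨q, rfl⟩
    refine (pow_dvd_pow _ hm').trans ?_
    rw [PP_pow, pow_mul]
    exact sub_one_dvd_pow_sub_one _ _

open Polynomial in
lemma PP_dvd_X {a b m k : ℕ} (hm : 2 ^ k < m) (hm' : m ≤ 2 ^ (k + 1)) :
    PP ^ m ∣ X ^ a + X ^ b ↔ a ≡ b [MOD 2 ^ (k + 1)] := by
  wlog hab : a ≤ b generalizing a b
  · rw [add_comm, Nat.ModEq.comm]
    exact this (by omega)
  rw [Nat.modEq_iff_dvd' hab, ← PP_dvd_aux hm hm']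
  have : (X ^ a + X ^ b : (ZMod 2)[X]) = X ^ a * (X ^ (b - a) - 1) := by
    rw [mul_sub, ← pow_add, Nat.add_sub_cancel' hab, mul_one, sub_eq_add_neg, poly_neg, add_comm]
  rw [this]
  have hc : IsCoprime (PP ^ m) (X ^ a) := by
    apply IsCoprime.pow
    refine ⟨-1, 1, ?_⟩
    rw [PP, C_1]; ring
  exact ⟨fun h => hc.dvd_of_dvd_mul_left h, fun h => h.mul_left _⟩

lemma wt_le_one {N : ℕ} (T : Fin N → ZMod 2) : wt T ≤ 1 ↔ T = 0 ∨ ∃ j, T = E1 j := by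
  unfold wt
  constructor
  · intro h
    by_cases h0 : T = 0
    · exact Or.inl h0
    right
    obtain ⟨j, hj⟩ := Function.ne_iff.mp h0
    refine ⟨j, ?_⟩
    rw [Finset.card_le_one] at h
    have two : ∀ x : ZMod 2, x ≠ 0 → x = 1 := by decide
    funext i
    unfold E1
    split_ifs with hi
    · rw [hi]
      exact two _ hj
    · by_contra hc
      exact hi (h i (by simpa using hc) j (by simpa using hj))
  · rintro (rfl | ⟨j, rfl⟩)
    · simp
    · rw [Finset.card_le_one]
      intro a ha b hb
      have ha' : a = j := by simpa [E1] using ha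
      have hb' : b = j := by simpa [E1] using hb
      rw [ha', hb']

open Polynomial in
lemma wt_odd {N : ℕ} (S : Fin N → ZMod 2) : Odd (wt S) ↔ ¬ PP ∣ genPoly S := by
  have h : (wt S : ZMod 2) = (genPoly S).eval 1 := by
    unfold wt genPoly
    rw [eval_finsetSum, Finset.card_filter]
    push_cast
    apply Finset.sum_congr rfl
    intro i _
    simp only [eval_mul, eval_C, eval_pow, eval_X, one_pow, mul_one]
    generalize S i = x
    revert x
    decide
  rw [PP, dvd_iff_isRoot, IsRoot.def, ← h, ZMod.natCast_eq_zero_iff_even, Nat.not_even_iff_odd]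

open Polynomial in
lemma count_dvd {N m : ℕ} (hm : m ≤ N) :
    {u : Fin N → ZMod 2 | PP ^ m ∣ genPoly u}.ncard = 2 ^ (N - m) := by
  have hnd : (PP ^ m).degree = (m : ℕ) := by
    rw [degree_eq_natDegree (pow_ne_zero _ PP_prime.ne_zero), PP_monic.natDegree_pow, PP_natDegree, mul_one]
  have hdeg (w : (ZMod 2)[X]) : (PP ^ m * w).degree < N ↔ w.degree < (N - m : ℕ) := by
    rw [degree_mul, hnd]
    by_cases hw : w = 0
    · simp [hw]
    rw [degree_eq_natDegree hw]
    norm_cast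
    omega
  let φ : (Fin (N - m) → ZMod 2) → (Fin N → ZMod 2) := fun w i => (PP ^ m * genPoly w).coeff i
  have hφ (w) : genPoly (φ w) = PP ^ m * genPoly w :=
    gp_of_deg _ ((hdeg _).mpr (gp_deg w))
  have hinj : Function.Injective φ := by
    intro w w' h
    have := congrArg genPoly h
    rw [hφ, hφ] at this
    exact gp_inj (mul_left_cancel₀ (pow_ne_zero _ PP_prime.ne_zero) this)
  have himg : {u : Fin N → ZMod 2 | PP ^ m ∣ genPoly u} = Set.range φ := by
    ext u
    constructor
    · rintro ⟨w, hw⟩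
      have h1 := (hdeg w).mp (hw ▸ gp_deg u)
      refine ⟨fun i => w.coeff i, gp_inj ?_⟩
      rw [hφ, gp_of_deg _ h1, hw]
    · rintro ⟨w, rfl⟩
      exact ⟨_, hφ w⟩
  rw [himg, ← Set.image_univ, Set.ncard_image_of_injective _ hinj, Set.ncard_univ]
  simp

lemma count_lc {n c : ℕ} (hc : 0 < c) (hcn : c ≤ 2 ^ n) :
    {u : Fin (2 ^ n) → ZMod 2 | linComp u = c}.ncard = 2 ^ (c - 1) := by
  obtain ⟨d, hd, rfl⟩ : ∃ d, d < 2 ^ n ∧ c = 2 ^ n - d := ⟨2 ^ n - c, by omega, by omega⟩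
  have : {u : Fin (2 ^ n) → ZMod 2 | linComp u = 2 ^ n - d} =
      {u : Fin (2 ^ n) → ZMod 2 | PP ^ d ∣ genPoly u} \ {u | PP ^ (d + 1) ∣ genPoly u} := by
    ext u
    exact linComp_eq_iff u hd
  have hsub : {u : Fin (2 ^ n) → ZMod 2 | PP ^ (d + 1) ∣ genPoly u} ⊆
      {u | PP ^ d ∣ genPoly u} := fun u hu => (pow_dvd_pow _ (Nat.le_succ d)).trans hu
  rw [this, Set.ncard_sdiff hsub,
    count_dvd hd.le, count_dvd hd]
  obtain ⟨k, hk⟩ : ∃ k, 2 ^ n - d = k + 1 := ⟨2 ^ n - d - 1, by omega⟩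
  have : 2 ^ n - (d + 1) = k := by omega
  rw [this, hk, pow_succ]
  simp
  omega

lemma sInf_eq_iff_of_pos {A : Set ℕ} {c : ℕ} (hc : 0 < c) :
    sInf A = c ↔ c ∈ A ∧ ∀ x ∈ A, c ≤ x := by
  constructor
  · rintro rfl
    exact ⟨Nat.sInf_mem (Nat.nonempty_of_pos_sInf hc), fun x hx => Nat.sInf_le hx⟩
  · rintro ⟨h1, h2⟩
    exact le_antisymm (Nat.sInf_le h1) (le_csInf ⟨c, h1⟩ h2)

lemma dvd_trans_add {m : ℕ} {p q r : Polynomial (ZMod 2)} (h1 : PP ^ m ∣ p + q)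
    (h2 : PP ^ m ∣ p + r) : PP ^ m ∣ q + r := by
  have : q + r = (p + q) + (p + r) := by
    have := CharTwo.add_self_eq_zero p
    linear_combination (-1 : Polynomial (ZMod 2)) * this
  rw [this]
  exact dvd_add h1 h2

lemma zone_iff {n : ℕ} (S : Fin (2 ^ n) → ZMod 2) (hS : Odd (wt S)) {m Z : ℕ} (hm0 : 0 < m)
    (hm : m < 2 ^ n) :
    errLCZone S 1 Z = 2 ^ n - m ↔
      (∃ j : Fin (2 ^ n), (j : ℕ) < Z ∧ PP ^ m ∣ genPoly S + Polynomial.X ^ (j : ℕ)) ∧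
      ∀ j : Fin (2 ^ n), (j : ℕ) < Z → ¬ PP ^ (m + 1) ∣ genPoly S + Polynomial.X ^ (j : ℕ) := by
  rw [wt_odd] at hS
  have hS' (k : ℕ) (hk : 0 < k) : ¬ PP ^ k ∣ genPoly S := fun h =>
    hS ((dvd_pow_self PP hk.ne').trans h)
  have hz (j : Fin (2 ^ n)) :
      (∀ i : Fin (2 ^ n), Z ≤ (i : ℕ) → (E1 j : Fin (2 ^ n) → ZMod 2) i = 0) ↔ (j : ℕ) < Z := by
    constructor
    · intro h
      by_contra hc
      have := h j (by omega)
      simp [E1] at this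
    · intro h i hi
      unfold E1
      rw [if_neg]
      rintro rfl
      omega
  unfold errLCZone
  rw [sInf_eq_iff_of_pos (by omega)]
  constructor
  · rintro ⟨⟨T, hT, hTz, hTc⟩, hmin⟩
    have key : ∀ j : Fin (2 ^ n), (j : ℕ) < Z →
        ¬ PP ^ (m + 1) ∣ genPoly S + Polynomial.X ^ (j : ℕ) := by
      intro j hj hd
      have := hmin _ ⟨E1 j, (wt_le_one _).mpr (Or.inr ⟨j, rfl⟩), (hz j).mpr hj, rfl⟩
      rw [← gp_E1, ← gp_add, ← linComp_le_iff _ (show m + 1 ≤ 2 ^ n from hm)] at hd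
      omega
    refine ⟨?_, key⟩
    rw [linComp_eq_iff _ hm] at hTc
    rcases (wt_le_one T).mp hT with rfl | ⟨j, rfl⟩
    · rw [add_zero] at hTc
      exact absurd hTc.1 (hS' _ hm0)
    · rw [gp_add, gp_E1] at hTc
      exact ⟨j, (hz j).mp hTz, hTc.1⟩
  · rintro ⟨⟨j, hj, hd⟩, hmin⟩
    refine ⟨⟨E1 j, (wt_le_one _).mpr (Or.inr ⟨j, rfl⟩), (hz j).mpr hj, ?_⟩, ?_⟩
    · rw [linComp_eq_iff _ hm, gp_add, gp_E1]
      exact ⟨hd, hmin j hj⟩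
    · rintro x ⟨T, hT, hTz, rfl⟩
      by_contra hc
      have hc' : linComp (S + T) ≤ 2 ^ n - (m + 1) := by omega
      rw [linComp_le_iff _ (show m + 1 ≤ 2 ^ n from hm)] at hc'
      rcases (wt_le_one T).mp hT with rfl | ⟨j, rfl⟩
      · rw [add_zero] at hc'
        exact hS' _ (by omega) hc'
      · rw [gp_add, gp_E1] at hc'
        exact hmin j ((hz j).mp hTz) hc'

lemma errLC_eq {N : ℕ} (S : Fin N → ZMod 2) (k : ℕ) : errLC S k = errLCZone S k N := by
  unfold errLC errLCZone
  congr 1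
  ext c
  constructor
  · rintro ⟨T, h, h'⟩
    exact ⟨T, h, fun i hi => absurd i.2 (by omega), h'⟩
  · rintro ⟨T, h, _, h'⟩
    exact ⟨T, h, h'⟩

set_option maxHeartbeats 2000000 in
/-- Case `s > a`, `a+1 ≤ t ≤ s-1`: exactly `Z · 2^{c+s-t-2}` odd-weight sequences
with `L_1(S) = c` satisfy `L_{1;Z}(S) = 2^n - 2^t`. -/
theorem stmt11 (n Z s c t : ℕ) (hn : 4 ≤ n) (hZ0 : 0 < Z) (hZ : Z ≤ 2^n)
    (h1 : 2^n - 2^s < c) (h2 : c < 2^n - 2^(s-1)) (hsa : Nat.log 2 Z < s)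
    (ht1 : Nat.log 2 Z + 1 ≤ t) (ht2 : t ≤ s - 1) :
    {S : Fin (2^n) → ZMod 2 | Odd (wt S) ∧ errLC S 1 = c ∧
      errLCZone S 1 Z = 2^n - 2^t}.ncard = Z * 2^(c + s - t - 2) := by
  -- parameters
  have hs1 : 2 ^ (s - 1) < 2 ^ n := by omega
  have hsn : s ≤ n := by
    have := (Nat.pow_lt_pow_iff_right (by norm_num : 1 < 2)).mp hs1
    omega
  have hsN : 2 ^ s ≤ 2 ^ n := Nat.pow_le_pow_right (by norm_num) hsn
  obtain ⟨k, rfl⟩ : ∃ k, s = k + 1 := ⟨s - 1, by omega⟩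
  simp only [Nat.add_sub_cancel] at h2 ht2 hs1
  obtain ⟨d, hdN, rfl⟩ : ∃ d, d < 2 ^ n ∧ c = 2 ^ n - d := ⟨2 ^ n - c, by omega, by omega⟩
  have hd1 : 2 ^ k < d := by omega
  have hd2 : d + 1 ≤ 2 ^ (k + 1) := by omega
  have htk : 2 ^ t ≤ 2 ^ k := Nat.pow_le_pow_right (by norm_num) ht2
  have hZt : Z < 2 ^ t := Nat.lt_pow_of_log_lt (by norm_num) (by omega)
  have ht0 : 0 < 2 ^ t := by positivity
  obtain ⟨t', ht'⟩ : ∃ t', t = t' + 1 := ⟨t - 1, by omega⟩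
  have ht't : 2 ^ t' < 2 ^ t := Nat.pow_lt_pow_right (by norm_num) (by omega)
  have htt : 2 ^ (t + 1) = 2 * 2 ^ t := by rw [pow_succ, mul_comm]
  have hX {a b : ℕ} : PP ^ (2 ^ t) ∣ Polynomial.X ^ a + Polynomial.X ^ b ↔ a ≡ b [MOD 2 ^ t] := by
    have := @PP_dvd_X a b (2 ^ t) t' ht't (by rw [← ht'])
    rwa [← ht'] at this
  have hX1 {a b : ℕ} : PP ^ (2 ^ t + 1) ∣ Polynomial.X ^ a + Polynomial.X ^ b ↔
      a ≡ b [MOD 2 ^ (t + 1)] := PP_dvd_X (by omega) (by omega)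
  have hXd {a b : ℕ} : PP ^ d ∣ Polynomial.X ^ a + Polynomial.X ^ b ↔
      a ≡ b [MOD 2 ^ (k + 1)] := PP_dvd_X (by omega) (by omega)
  have hXd1 {a b : ℕ} : PP ^ (d + 1) ∣ Polynomial.X ^ a + Polynomial.X ^ b ↔
      a ≡ b [MOD 2 ^ (k + 1)] := PP_dvd_X (by omega) (by omega)
  have hkt : 2 ^ (k + 1) = 2 ^ (t + 1) * 2 ^ (k - t) := by
    rw [← pow_add]; congr 1; omega
  have hrlt (z : Fin Z) (q : Fin (2 ^ (k - t))) :
      2 ^ (t + 1) * (q : ℕ) + (2 ^ t + z) < 2 ^ (k + 1) := by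
    have h3 : 2 ^ (t + 1) * ((q : ℕ) + 1) ≤ 2 ^ (t + 1) * 2 ^ (k - t) :=
      Nat.mul_le_mul_left _ q.2
    have := z.2
    rw [mul_add] at h3
    omega
  let r : Fin Z × Fin (2 ^ (k - t)) → Fin (2 ^ n) := fun p =>
    ⟨2 ^ (t + 1) * (p.2 : ℕ) + (2 ^ t + p.1), (hrlt p.1 p.2).trans_le hsN⟩
  have hrv (p) : (r p : ℕ) = 2 ^ (t + 1) * (p.2 : ℕ) + (2 ^ t + p.1) := rfl
  have hrk (p) : (r p : ℕ) < 2 ^ (k + 1) := hrlt p.1 p.2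
  have hrmod1 (p) : (r p : ℕ) % 2 ^ (t + 1) = 2 ^ t + p.1 := by
    rw [hrv, Nat.mul_add_mod, Nat.mod_eq_of_lt]
    have := p.1.2
    omega
  have hrinj : Function.Injective r := by
    intro p p' h
    have e1 := hrmod1 p
    have e2 := hrmod1 p'
    rw [h, e2] at e1
    have e3 : (r p : ℕ) = r p' := by rw [h]
    rw [hrv, hrv] at e3
    have e4 : 2 ^ (t + 1) * (p.2 : ℕ) = 2 ^ (t + 1) * (p'.2 : ℕ) := by omega
    have e5 := Nat.eq_of_mul_eq_mul_left (by positivity) e4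
    exact Prod.ext (Fin.ext (by omega)) (Fin.ext e5)
  let U : Set (Fin (2 ^ n) → ZMod 2) := {u | linComp u = 2 ^ n - d}
  let f : (Fin Z × Fin (2 ^ (k - t))) × (Fin (2 ^ n) → ZMod 2) → (Fin (2 ^ n) → ZMod 2) :=
    fun p => E1 (r p.1) + p.2
  have hselfadd (p : Polynomial (ZMod 2)) : p + p = 0 := CharTwo.add_self_eq_zero p
  have himg : {S : Fin (2^n) → ZMod 2 | Odd (wt S) ∧ errLC S 1 = 2 ^ n - d ∧
      errLCZone S 1 Z = 2^n - 2^t} = f '' (Set.univ ×ˢ U) := by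
    ext S
    constructor
    · rintro ⟨hodd, hL, hLZ⟩
      rw [errLC_eq, zone_iff S hodd (by omega) hdN] at hL
      rw [zone_iff S hodd ht0 (by omega)] at hLZ
      obtain ⟨⟨j, -, hj⟩, hjmin⟩ := hL
      obtain ⟨⟨i, hiZ, hi⟩, himin⟩ := hLZ
      have hpos : 0 < 2 ^ (k + 1) := by positivity
      have hrlt' : (j : ℕ) % 2 ^ (k + 1) < 2 ^ (k + 1) := Nat.mod_lt _ hpos
      let R : Fin (2 ^ n) := ⟨(j : ℕ) % 2 ^ (k + 1), hrlt'.trans_le hsN⟩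
      have hRv : (R : ℕ) = (j : ℕ) % 2 ^ (k + 1) := rfl
      have hR : PP ^ d ∣ genPoly S + Polynomial.X ^ (R : ℕ) := by
        have h4 : PP ^ d ∣ Polynomial.X ^ (j : ℕ) + Polynomial.X ^ (R : ℕ) :=
          hXd.mpr (Nat.mod_modEq _ _).symm
        rw [add_comm (genPoly S)] at hj
        exact dvd_trans_add hj h4
      have hR1 : ¬ PP ^ (d + 1) ∣ genPoly S + Polynomial.X ^ (R : ℕ) := hjmin R R.2
      have hRi : (R : ℕ) ≡ i [MOD 2 ^ t] :=
        hX.mp (dvd_trans_add ((pow_dvd_pow _ (by omega)).trans hR) hi)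
      have hRi' : ¬ (R : ℕ) ≡ i [MOD 2 ^ (t + 1)] := by
        intro hc
        apply himin i hiZ
        have h5 : PP ^ (2 ^ t + 1) ∣ genPoly S + Polynomial.X ^ (R : ℕ) :=
          (pow_dvd_pow _ (by omega)).trans hR
        rw [add_comm (genPoly S)] at h5
        exact dvd_trans_add h5 (hX1.mpr hc)
      have hit : (i : ℕ) % 2 ^ t = i := Nat.mod_eq_of_lt (by omega)
      have hit1 : (i : ℕ) % 2 ^ (t + 1) = i := Nat.mod_eq_of_lt (by omega)
      unfold Nat.ModEq at hRi hRi'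
      rw [hit] at hRi
      rw [hit1] at hRi'
      have hmm : (R : ℕ) % 2 ^ (t + 1) % 2 ^ t = (R : ℕ) % 2 ^ t :=
        Nat.mod_mod_of_dvd _ (pow_dvd_pow 2 (Nat.le_succ t))
      have hlt : (R : ℕ) % 2 ^ (t + 1) < 2 ^ (t + 1) := Nat.mod_lt _ (by positivity)
      have hR2 : (R : ℕ) % 2 ^ (t + 1) = 2 ^ t + i := by
        generalize (R : ℕ) % 2 ^ (t + 1) = y at *
        rw [hRi] at hmm
        by_cases hy : y < 2 ^ t
        · rw [Nat.mod_eq_of_lt hy] at hmm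
          exact absurd hmm hRi'
        · have : y = 2 ^ t + (y - 2 ^ t) := by omega
          rw [this, Nat.add_mod_left, Nat.mod_eq_of_lt (by omega)] at hmm
          omega
      have hq : (R : ℕ) / 2 ^ (t + 1) < 2 ^ (k - t) := by
        apply Nat.div_lt_of_lt_mul
        rw [← hkt, hRv]
        exact hrlt'
      let p : Fin Z × Fin (2 ^ (k - t)) := (⟨i, hiZ⟩, ⟨_, hq⟩)
      have hrp : r p = R := by
        apply Fin.ext
        rw [hrv]
        change 2 ^ (t + 1) * ((R : ℕ) / 2 ^ (t + 1)) + (2 ^ t + (i : ℕ)) = R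
        rw [← hR2]
        exact Nat.div_add_mod _ _
      refine ⟨(p, S + E1 R), ⟨Set.mem_univ _, ?_⟩, ?_⟩
      · change linComp _ = _
        rw [linComp_eq_iff _ hdN, gp_add, gp_E1]
        exact ⟨hR, hR1⟩
      · apply gp_inj
        change genPoly (E1 (r p) + (S + E1 R)) = _
        rw [hrp, gp_add, gp_add]
        linear_combination hselfadd (genPoly (E1 R))
    · rintro ⟨⟨p, u⟩, ⟨-, hu⟩, rfl⟩
      change linComp u = _ at hu
      rw [linComp_eq_iff _ hdN] at hu
      obtain ⟨hu, hu1⟩ := hu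
      have hS : genPoly (f (p, u)) = Polynomial.X ^ (r p : ℕ) + genPoly u := by
        change genPoly (E1 (r p) + u) = _
        rw [gp_add, gp_E1]
      generalize f (p, u) = S at *
      have hSr : genPoly S + Polynomial.X ^ (r p : ℕ) = genPoly u := by
        rw [hS]
        linear_combination hselfadd (Polynomial.X ^ (r p : ℕ))
      have hodd : Odd (wt S) := by
        rw [wt_odd, hS]
        intro hc
        have hPu : PP ∣ genPoly u := (dvd_pow_self PP (by omega)).trans hu
        have h6 : PP ∣ Polynomial.X ^ (r p : ℕ) := (dvd_add_left hPu).mp hc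
        have h7 := PP_prime.dvd_of_dvd_pow h6
        rw [PP, Polynomial.dvd_iff_isRoot, Polynomial.IsRoot.def, Polynomial.eval_X] at h7
        exact one_ne_zero h7
      -- errors elsewhere
      have hgen (m : ℕ) (hm : m ≤ d) (j : ℕ) : PP ^ m ∣ genPoly S + Polynomial.X ^ j ↔
          PP ^ m ∣ Polynomial.X ^ (r p : ℕ) + Polynomial.X ^ j := by
        have h8 : PP ^ m ∣ genPoly S + Polynomial.X ^ (r p : ℕ) := by
          rw [hSr]
          exact (pow_dvd_pow _ hm).trans hu
        constructor
        · exact fun h => dvd_trans_add h8 h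
        · intro h
          rw [add_comm (genPoly S)] at h8
          exact dvd_trans_add h8 h
      refine ⟨hodd, ?_, ?_⟩
      · rw [errLC_eq, zone_iff S hodd (by omega) hdN]
        refine ⟨⟨r p, (r p).2, by rwa [hSr]⟩, ?_⟩
        intro j _ hc
        have h9 := (hgen d le_rfl j).mp ((pow_dvd_pow _ (Nat.le_succ d)).trans hc)
        have h10 := hXd1.mpr (hXd.mp h9)
        apply hu1
        rw [← hSr]
        rw [add_comm (genPoly S)] at hc
        rw [add_comm (Polynomial.X ^ (r p : ℕ))] at h10
        exact dvd_trans_add hc h10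
      · rw [zone_iff S hodd ht0 (by omega)]
        have hpZ := p.1.2
        refine ⟨⟨⟨(p.1 : ℕ), by omega⟩, hpZ, ?_⟩, ?_⟩
        · rw [hgen _ (by omega), hX]
          have : (r p : ℕ) = 2 ^ t * (2 * (p.2 : ℕ) + 1) + p.1 := by
            rw [hrv, htt]; ring
          rw [this]
          unfold Nat.ModEq
          rw [Nat.mul_add_mod]
        · intro j hj hc
          rw [hgen _ (by omega), hX1] at hc
          unfold Nat.ModEq at hc
          rw [hrmod1, Nat.mod_eq_of_lt (by omega)] at hc
          omega
  have hinj : Set.InjOn f (Set.univ ×ˢ U) := by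
    rintro ⟨p, u⟩ ⟨-, hu⟩ ⟨p', u'⟩ ⟨-, hu'⟩ h
    change linComp u = _ at hu
    change linComp u' = _ at hu'
    rw [linComp_eq_iff _ hdN] at hu hu'
    have h3 := congrArg genPoly h
    change genPoly (E1 (r p) + u) = genPoly (E1 (r p') + u') at h3
    rw [gp_add, gp_add, gp_E1, gp_E1] at h3
    have h4 : PP ^ d ∣ Polynomial.X ^ (r p : ℕ) + Polynomial.X ^ (r p' : ℕ) := by
      have : (Polynomial.X ^ (r p : ℕ) + Polynomial.X ^ (r p' : ℕ) : Polynomial (ZMod 2)) =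
          genPoly u' - genPoly u := by
        linear_combination h3 + hselfadd (Polynomial.X ^ (r p' : ℕ))
      rw [this]
      exact dvd_sub hu'.1 hu.1
    have h5 : (r p : ℕ) = r p' := Nat.ModEq.eq_of_lt_of_lt (hXd.mp h4) (hrk p) (hrk p')
    have h6 : p = p' := hrinj (Fin.ext h5)
    subst h6
    exact Prod.ext rfl (add_left_cancel h)
  rw [himg, Set.ncard_image_of_injOn hinj, Set.ncard_prod, Set.ncard_univ,
    count_lc (by omega) (by omega)]
  simp only [Nat.card_eq_fintype_card, Fintype.card_prod, Fintype.card_fin]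
  rw [mul_assoc, ← pow_add]
  congr 2
  omega
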